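/- Let (G,·,∘,⊳) be a post-brace. Define a ∗ b := a ∘ (a ⊳ b). Then (G,·,∗) is a brace whose unit is the common unit e of (G,·) and (G,∘); it is called the sub-adjacent brace of the post-brace. -/

import Mathlib

/-!
Associativity of `a ∗ b = a ∘ (a ⊳ b)` is weighted associativity combined with the fact that each
`a ⊳ ·` is `∘`-multiplicative. Since `a ⊳ ·` is a bijection fixing the unit, that unit is a right
unit for `∗`, and solving `a ⊳ x = ā` gives a right `∗`-inverse `x` of `a`; an associative operation
with a right unit and right inverses is a group. Compatibility with `·` passes from `∘` to `∗`
because `a ⊳ ·` is also `·`-multiplicative.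
-/

structure IsGroup {G : Type*} (op : G → G → G) (e : G) (inv : G → G) : Prop where
  assoc : ∀ a b c, op (op a b) c = op a (op b c)
  one_op : ∀ a, op e a = a
  op_one : ∀ a, op a e = a
  inv_op : ∀ a, op (inv a) a = e
  op_inv : ∀ a, op a (inv a) = e

/-- A brace: an abelian group `(G, mul)` and a group `(G, circ)` with the compatibility
`a ∘ (b · c) = (a ∘ b) · a⁻¹ · (a ∘ c)`. -/
structure IsBrace {G : Type*} (mul : G → G → G) (e : G) (inv : G → G)
    (circ : G → G → G) (ce : G) (cinv : G → G) : Prop where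
  mul_group : IsGroup mul e inv
  mul_comm : ∀ a b, mul a b = mul b a
  circ_group : IsGroup circ ce cinv
  compat : ∀ a b c, circ a (mul b c) = mul (mul (circ a b) (inv a)) (circ a c)

/-- A homomorphism of braces preserves both operations. -/
def IsBraceHom {G H : Type*} (mulG circG : G → G → G) (mulH circH : H → H → H)
    (f : G → H) : Prop :=
  (∀ a b, f (mulG a b) = mulH (f a) (f b)) ∧ (∀ a b, f (circG a b) = circH (f a) (f b))

/-- A brace automorphism: a bijective self-homomorphism. -/
def IsBraceAut {H : Type*} (mulH circH : H → H → H) (f : H → H) : Prop :=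
  Function.Bijective f ∧ IsBraceHom mulH circH mulH circH f

/-- A semi-trivial action of the brace `G` on the brace `H`: each `Φ a` is a brace
automorphism of `H` and `Φ (a ∘ b) = Φ a ∘ Φ b`. -/
def IsSemiTrivialAction {G H : Type*} (circG : G → G → G)
    (mulH circH : H → H → H) (Φ : G → H → H) : Prop :=
  (∀ a, IsBraceAut mulH circH (Φ a)) ∧ (∀ a b h, Φ (circG a b) h = Φ a (Φ b h))

/-- A relative Rota-Baxter operator on the brace `G` with respect to the semi-trivial
action `Φ` of `G` on `H`. -/
def IsRelRBO {G H : Type*} (mulG circG : G → G → G) (mulH circH : H → H → H)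
    (Φ : G → H → H) (B : H → G) : Prop :=
  (∀ h k, mulG (B h) (B k) = B (mulH h k)) ∧
  (∀ h k, circG (B h) (B k) = B (circH h (Φ (B h) k)))

/-- An enhanced relative Rota-Baxter operator. -/
def IsEnhancedRelRBO {G H : Type*} (mulG circG : G → G → G) (mulH circH : H → H → H)
    (Φ : G → H → H) (B : H → G) : Prop :=
  (∀ h k, mulG (B h) (B k) = B (mulH h k)) ∧
  (∀ (a : G) (h k : H), circG (mulG (B h) a) (B k)
      = mulG (B (circH h (Φ (mulG (B h) a) k))) a)

/-- A post-group: a group `(G, circ)` with an operation `tri` such that each left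
multiplication `tri a` is an automorphism of `(G, circ)` and the weighted associativity
`(a ∘ (a ⊳ b)) ⊳ c = a ⊳ (b ⊳ c)` holds. -/
structure IsPostGroup {G : Type*} (circ : G → G → G) (ce : G) (cinv : G → G)
    (tri : G → G → G) : Prop where
  circ_group : IsGroup circ ce cinv
  tri_bij : ∀ a, Function.Bijective (tri a)
  tri_circ : ∀ a b c, tri a (circ b c) = circ (tri a b) (tri a c)
  weighted : ∀ a b c, tri (circ a (tri a b)) c = tri a (tri b c)

/-- A post-brace: a brace `(G, mul, circ)` with `tri` making `(G, circ, tri)` a post-group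
and `a ⊳ (b · c) = (a ⊳ b) · (a ⊳ c)`. -/
structure IsPostBrace {G : Type*} (mul : G → G → G) (e : G) (inv : G → G)
    (circ : G → G → G) (ce : G) (cinv : G → G) (tri : G → G → G) : Prop where
  brace : IsBrace mul e inv circ ce cinv
  post : IsPostGroup circ ce cinv tri
  tri_mul : ∀ a b c, tri a (mul b c) = mul (tri a b) (tri a c)

/-- A two-sided brace. -/
def IsTwoSidedBrace {G : Type*} (mul : G → G → G) (e : G) (inv : G → G)
    (circ : G → G → G) (ce : G) (cinv : G → G) : Prop :=
  IsBrace mul e inv circ ce cinv ∧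
  ∀ a b c, circ (mul a b) c = mul (mul (circ a c) (inv c)) (circ b c)

/-- The adjoint action of the `circ`-group: `Ad∘_a(b) = a ∘ b ∘ ā`. -/
def adC {G : Type*} (circ : G → G → G) (cinv : G → G) (a b : G) : G :=
  circ (circ a b) (cinv a)

/-- A Rota-Baxter operator on a two-sided brace (w.r.t. the adjoint semi-trivial action). -/
def IsRBTwoSided {G : Type*} (mul circ : G → G → G) (cinv : G → G) (B : G → G) : Prop :=
  (∀ a b, mul (B a) (B b) = B (mul a b)) ∧
  (∀ a b, circ (B a) (B b) = B (circ a (adC circ cinv (B a) b)))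

/-- An enhanced Rota-Baxter operator on a two-sided brace. -/
def IsEnhancedRBTwoSided {G : Type*} (mul circ : G → G → G) (cinv : G → G)
    (B : G → G) : Prop :=
  IsRBTwoSided mul circ cinv B ∧
  ∀ a b x, circ (mul (B a) x) (B b)
      = mul (B (circ a (adC circ cinv (mul (B a) x) b))) x

/-- `R × Id` on `X × X × X`. -/
def YB12 {X : Type*} (R : X × X → X × X) : X × X × X → X × X × X :=
  fun p => ((R (p.1, p.2.1)).1, (R (p.1, p.2.1)).2, p.2.2)

/-- `Id × R` on `X × X × X`. -/
def YB23 {X : Type*} (R : X × X → X × X) : X × X × X → X × X × X :=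
  fun p => (p.1, R p.2)

/-- A set-theoretical solution of the Yang-Baxter equation. -/
def IsYBSolution {X : Type*} (R : X × X → X × X) : Prop :=
  Function.Bijective R ∧
  YB12 R ∘ YB23 R ∘ YB12 R = YB23 R ∘ YB12 R ∘ YB23 R

/-- Non-degeneracy of a solution `R (a, b) = (φ_a b, ψ_b a)`. -/
def IsNonDegenerate {X : Type*} (R : X × X → X × X) : Prop :=
  (∀ a, Function.Bijective fun b => (R (a, b)).1) ∧
  (∀ b, Function.Bijective fun a => (R (a, b)).2)

/-- Involutivity of a solution: `R ∘ R = Id`. -/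
def IsInvolutiveSol {X : Type*} (R : X × X → X × X) : Prop :=
  ∀ p, R (R p) = p

/-- A matched pair of groups `(G, H, σ)` with `σ (a, h) = (r a h, l a h)`. -/
def IsMatchedPairOfGroups {G H : Type*} (opG : G → G → G) (eG : G)
    (opH : H → H → H) (eH : H) (r : G → H → H) (l : G → H → G) : Prop :=
  (∀ h, r eG h = h) ∧
  (∀ a b h, r a (r b h) = r (opG a b) h) ∧
  (∀ a b h, l (opG a b) h = opG (l a (r b h)) (l b h)) ∧
  (∀ a, l a eH = a) ∧
  (∀ a h k, l (l a h) k = l a (opH h k)) ∧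
  (∀ a h k, r a (opH h k) = opH (r a h) (r (l a h) k))

/-- A left ideal of the brace with multiplication `op` (with unit `u`) and second
operation `cop`: a subgroup of the `op`-group such that `p⁻¹ op (p cop x) ∈ S`
(expressed via the unique solution `r` of `op p r = cop p x`). -/
def IsLeftIdealOf {P : Type*} (op : P → P → P) (u : P) (cop : P → P → P)
    (S : Set P) : Prop :=
  u ∈ S ∧ (∀ p ∈ S, ∀ q ∈ S, op p q ∈ S) ∧
  (∀ p ∈ S, ∃ q ∈ S, op p q = u ∧ op q p = u) ∧
  (∀ p : P, ∀ x ∈ S, ∀ r, op p r = cop p x → r ∈ S)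

/-- `I` is an ideal of the sub-brace `S` of the ambient brace: a subgroup of `(S, mul)`,
normal in `(S, mul)` and in `(S, circ)`, and a left ideal of `S`. -/
def IsIdealOfSub {G : Type*} (mul : G → G → G) (e : G) (inv : G → G)
    (circ : G → G → G) (cinv : G → G) (S I : Set G) : Prop :=
  I ⊆ S ∧ e ∈ I ∧
  (∀ x ∈ I, ∀ y ∈ I, mul x y ∈ I) ∧ (∀ x ∈ I, inv x ∈ I) ∧
  (∀ s ∈ S, ∀ x ∈ I, mul (mul s x) (inv s) ∈ I) ∧
  (∀ s ∈ S, ∀ x ∈ I, circ (circ s x) (cinv s) ∈ I) ∧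
  (∀ s ∈ S, ∀ x ∈ I, mul (inv s) (circ s x) ∈ I)

/-- The Mathlib group with the operations of an unbundled `IsGroup`, which makes the library's
lemmas about groups available. -/
abbrev IsGroup.toGroup {G : Type*} {op : G → G → G} {e : G} {inv : G → G}
    (h : IsGroup op e inv) : Group G where
  mul := op
  mul_assoc := h.assoc
  one := e
  one_mul := h.one_op
  mul_one := h.op_one
  inv := inv
  inv_mul_cancel := h.inv_op

theorem IsGroup.of_right_axioms {G : Type*} {op : G → G → G} {e : G} {inv : G → G}
    (assoc : ∀ a b c, op (op a b) c = op a (op b c)) (op_one : ∀ a, op a e = a)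
    (op_inv : ∀ a, op a (inv a) = e) : IsGroup op e inv :=
  letI : Mul G := ⟨op⟩
  letI : One G := ⟨e⟩
  letI : Inv G := ⟨inv⟩
  letI : Group G := Group.ofRightAxioms assoc op_one op_inv
  ⟨mul_assoc, one_mul, mul_one, inv_mul_cancel, mul_inv_cancel⟩

theorem IsGroup.map_one {G H : Type*} {opG : G → G → G} {eG : G} {invG : G → G}
    {opH : H → H → H} {eH : H} {invH : H → H} (hG : IsGroup opG eG invG)
    (hH : IsGroup opH eH invH) {f : G → H} (map_op : ∀ a b, f (opG a b) = opH (f a) (f b)) :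
    f eG = eH :=
  letI := hG.toGroup
  letI := hH.toGroup
  _root_.map_one (MonoidHom.mk' f map_op)

theorem IsBrace.circ_one_eq_one {G : Type*} {mul : G → G → G} {e : G} {inv : G → G}
    {circ : G → G → G} {ce : G} {cinv : G → G} (h : IsBrace mul e inv circ ce cinv) : ce = e := by
  have inv_ce : inv ce = e := by
    simpa only [h.circ_group.one_op, h.mul_group.one_op, h.mul_group.op_one]
      using (h.compat ce e e).symm
  calc
    ce = mul ce (inv ce) := by rw [inv_ce, h.mul_group.op_one]
    _ = e := h.mul_group.op_inv ce

/-- The sub-adjacent operation `a ∗ b = a ∘ (a ⊳ b)` of a post-group or a post-brace. -/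
def subAdj {G : Type*} (circ tri : G → G → G) (a b : G) : G :=
  circ a (tri a b)

namespace IsPostGroup

variable {G : Type*} {circ : G → G → G} {ce : G} {cinv : G → G} {tri : G → G → G}

theorem tri_one (h : IsPostGroup circ ce cinv tri) (a : G) : tri a ce = ce :=
  h.circ_group.map_one h.circ_group (h.tri_circ a)

theorem subAdj_assoc (h : IsPostGroup circ ce cinv tri) (a b c : G) :
    subAdj circ tri (subAdj circ tri a b) c = subAdj circ tri a (subAdj circ tri b c) :=
  calc
    circ (circ a (tri a b)) (tri (circ a (tri a b)) c)
      = circ (circ a (tri a b)) (tri a (tri b c)) := by rw [h.weighted]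
    _ = circ a (circ (tri a b) (tri a (tri b c))) := h.circ_group.assoc _ _ _
    _ = circ a (tri a (circ b (tri b c))) := by rw [h.tri_circ]

theorem subAdj_one (h : IsPostGroup circ ce cinv tri) (a : G) : subAdj circ tri a ce = a := by
  rw [subAdj, h.tri_one, h.circ_group.op_one]

theorem exists_subAdj_eq_one (h : IsPostGroup circ ce cinv tri) (a : G) :
    ∃ b, subAdj circ tri a b = ce := by
  obtain ⟨b, tri_eq_cinv⟩ := (h.tri_bij a).surjective (cinv a)
  exact ⟨b, by rw [subAdj, tri_eq_cinv, h.circ_group.op_inv]⟩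

theorem exists_isGroup_subAdj (h : IsPostGroup circ ce cinv tri) :
    ∃ sinv : G → G, IsGroup (subAdj circ tri) ce sinv := by
  choose sinv subAdj_sinv using h.exists_subAdj_eq_one
  exact ⟨sinv, .of_right_axioms h.subAdj_assoc h.subAdj_one subAdj_sinv⟩

end IsPostGroup

theorem IsPostBrace.subAdj_mul {G : Type*} {mul : G → G → G} {e : G} {inv : G → G}
    {circ : G → G → G} {ce : G} {cinv : G → G} {tri : G → G → G}
    (h : IsPostBrace mul e inv circ ce cinv tri) (a b c : G) :
    subAdj circ tri a (mul b c) =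
      mul (mul (subAdj circ tri a b) (inv a)) (subAdj circ tri a c) := by
  simp only [subAdj, h.tri_mul, h.brace.compat]

/-- The sub-adjacent structure `a ∗ b = a ∘ (a ⊳ b)` of a post-brace is
a brace whose unit is the common unit `e` of `(G, ·)` and `(G, ∘)`. -/
theorem statement4 {G : Type*} (mul : G → G → G) (e : G) (inv : G → G)
    (circ : G → G → G) (ce : G) (cinv : G → G) (tri : G → G → G)
    (hPB : IsPostBrace mul e inv circ ce cinv tri) :
    ce = e ∧
    ∃ sinv : G → G, IsBrace mul e inv (fun a b => circ a (tri a b)) e sinv := by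
  obtain rfl : ce = e := hPB.brace.circ_one_eq_one
  obtain ⟨sinv, subAdj_group⟩ := hPB.post.exists_isGroup_subAdj
  exact ⟨rfl, sinv, hPB.brace.mul_group, hPB.brace.mul_comm, subAdj_group, hPB.subAdj_mul⟩
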